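/- arXiv:math-ph/0112059 — 5 statements merged into one kernel-verified Lean document; each statement's English description precedes it below -/
import Mathlib

section
/- Suppose the continuous linear functional l₀ ∈ B* satisfies l₀(ρ(h)v) = χ(h)·l₀(v) for all h ∈ H and v ∈ B. Then the reduced wavelet transform intertwines ρ with the induced representation λ: for every g ∈ G and every v ∈ B, W(ρ(g)v) = λ(g)(Wv) as functions on X. -/
open MeasureTheory

/-!
The unreduced transform `g ↦ l₀ (g⁻¹ • v)` on all of `G` turns the action on `v` into left
translation, and the hypothesis on `l₀` makes it `χ⁻¹`-covariant under right translation by `H`.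
Left translation moves `s x` to `g⁻¹ * s x`, which factors as `s (p _) * r _`; covariance then
absorbs the factor in `H`, and what remains is the reduced transform.
-/

section WaveletTransform

variable {G V E X M : Type*} [Group G] [MulAction G V]

/-- The (unreduced) wavelet transform of `v` with analysing map `l₀`, a function on the whole group.
No linearity is imposed on the action, on `l₀` or on the target. -/
def waveletTransform (l₀ : V → E) (v : V) (g : G) : E :=
  l₀ (g⁻¹ • v)

/-- The reduced wavelet transform: the restriction of `waveletTransform` along `s : X → G`. -/
def reducedWaveletTransform (s : X → G) (l₀ : V → E) (v : V) (x : X) : E :=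
  waveletTransform l₀ v (s x)

/-- The operator `λ(g)` of the representation induced by `χ`, in terms of the section `s` and the
components `p` and `r` of a factorization of `G`. The values of `χ` lie in a group acting on `E`;
a nonvanishing scalar function is encoded by taking the group of units. -/
def inducedOperator [Group M] [MulAction M E] {H : Subgroup G} (s : X → G) (p : G → X) (r : G → H)
    (χ : H → M) (g : G) (f : X → E) (x : X) : E :=
  (χ (r (g⁻¹ * s x)))⁻¹ • f (p (g⁻¹ * s x))

theorem waveletTransform_smul (l₀ : V → E) (g : G) (v : V) (k : G) :
    waveletTransform l₀ (g • v) k = waveletTransform l₀ v (g⁻¹ * k) := by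
  simp only [waveletTransform, mul_inv_rev, inv_inv, mul_smul]

theorem waveletTransform_mul_of_covariant [Group M] [MulAction M E] {l₀ : V → E} {h : G} {c : M}
    (hl₀ : ∀ v, l₀ (h • v) = c • l₀ v) (v : V) (g : G) :
    waveletTransform l₀ v (g * h) = c⁻¹ • waveletTransform l₀ v g := by
  rw [eq_inv_smul_iff, waveletTransform, ← hl₀, mul_inv_rev, mul_smul, smul_inv_smul,
    waveletTransform]

theorem reduced_wavelet_transform_intertwines_general [Group M] [MulAction M E] (H : Subgroup G)
    (s : X → G) (p : G → X) (r : G → H) (hdecomp : ∀ g : G, g = s (p g) * (r g : G))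
    (χ : H → M) (l₀ : V → E) (hl₀ : ∀ (h : H) (v : V), l₀ ((h : G) • v) = χ h • l₀ v)
    (g : G) (v : V) :
    reducedWaveletTransform s l₀ (g • v) =
      inducedOperator s p r χ g (reducedWaveletTransform s l₀ v) := by
  funext x
  calc
    waveletTransform l₀ (g • v) (s x) = waveletTransform l₀ v (g⁻¹ * s x) :=
      waveletTransform_smul l₀ g v (s x)
    _ = waveletTransform l₀ v (s (p (g⁻¹ * s x)) * r (g⁻¹ * s x)) :=
      congrArg (waveletTransform l₀ v) (hdecomp (g⁻¹ * s x))
    _ = (χ (r (g⁻¹ * s x)))⁻¹ • waveletTransform l₀ v (s (p (g⁻¹ * s x))) :=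
      waveletTransform_mul_of_covariant (hl₀ (r (g⁻¹ * s x))) v _

end WaveletTransform

/-- If the analysing functional `l₀` satisfies
`l₀(ρ(h)v) = χ(h)·l₀(v)` for all `h ∈ H`, then the reduced wavelet transform
`(Wv)(x) = l₀(ρ(s(x))⁻¹ v)` intertwines `ρ` with the induced representation
`[λ(g)f](x) = χ(r(g⁻¹·s(x)))⁻¹ · f(p(g⁻¹·s(x)))`. -/
theorem reduced_wavelet_transform_intertwines
    {G : Type*} [Group G] (H : Subgroup G) {X : Type*}
    (s : X → G) (p : G → X) (r : G → H)
    (hdecomp : ∀ g : G, g = s (p g) * (r g : G))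
    (huniq : ∀ (g : G) (x : X) (h : H), g = s x * (h : G) → x = p g ∧ h = r g)
    {B : Type*} [NormedAddCommGroup B] [NormedSpace ℂ B]
    (ρ : G →* (B ≃L[ℂ] B)) (χ : H → ℂ) (hχ : ∀ h : H, χ h ≠ 0)
    (l₀ : B →L[ℂ] ℂ)
    (hl₀ : ∀ (h : H) (v : B), l₀ (ρ (h : G) v) = χ h * l₀ v) :
    ∀ (g : G) (v : B) (x : X),
      l₀ ((ρ (s x))⁻¹ (ρ g v)) =
        (χ (r (g⁻¹ * s x)))⁻¹ * l₀ ((ρ (s (p (g⁻¹ * s x))))⁻¹ v) := by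
  intro g v x
  -- Mathlib has no action of `B ≃L[ℂ] B` on `B`, so `ρ` acts through the units of `B →L[ℂ] B`.
  let : MulAction G B :=
    MulAction.compHom B ((ContinuousLinearEquiv.unitsEquiv ℂ B).symm.toMonoidHom.comp ρ)
  rw [← map_inv, ← map_inv]
  exact congrFun (reduced_wavelet_transform_intertwines_general H s p r hdecomp
    (fun h => Units.mk0 (χ h) (hχ h)) l₀ hl₀ g v) x
end

section
/- Suppose ρ(h)b₀ = χ(h)·b₀ for all h ∈ H, and that for every g ∈ G the map x ↦ p(g⁻¹·s(x)) is a measurable bijection of X onto itself preserving the measure μ. Then for every g ∈ G and every function f : X → ℂ such that both x ↦ f(x)·ρ(s(x))b₀ and x ↦ [λ(g)f](x)·ρ(s(x))b₀ are Bochner integrable, the inverse wavelet transform intertwines λ with ρ: M(λ(g)f) = ρ(g)(Mf). -/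
open MeasureTheory

/-!
Write `g⁻¹ s(x) = s(y) h` with `y = p(g⁻¹ s(x))` and `h = r(g⁻¹ s(x))`. Then
`ρ(s(x)) b₀ = ρ(g) ρ(s(y)) ρ(h) b₀ = χ(h) ρ(g) ρ(s(y)) b₀`, so the factor `χ(h)⁻¹` in `λ(g)f`
cancels and the integrand of `M(λ(g)f)` at `x` is `ρ(g)` applied to the integrand of `Mf` at `y`.
The bounded operator `ρ(g)` commutes with the Bochner integral, and `x ↦ y` preserves `μ`.
-/

section InducedAction

variable {G X 𝕜 V : Type*} [Group G] {H : Subgroup G} [Field 𝕜]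
  {s : X → G} {p : G → X} {r : G → H} {χ : H → 𝕜}

/-- The operator `λ(g)` of the representation induced by `χ`, in the model on functions `X → 𝕜`
given by the section `s` and the decomposition maps `p`, `r`. -/
def inducedAction (s : X → G) (p : G → X) (r : G → H) (χ : H → 𝕜) (g : G) (f : X → 𝕜) : X → 𝕜 :=
  fun x ↦ (χ (r (g⁻¹ * s x)))⁻¹ * f (p (g⁻¹ * s x))

variable [AddCommMonoid V] [TopologicalSpace V] [Module 𝕜 V] {ρ : G →* (V ≃L[𝕜] V)} {b₀ : V}

theorem map_section_apply_eq_smul (hdecomp : ∀ g : G, g = s (p g) * (r g : G))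
    (hb₀ : ∀ h : H, ρ (h : G) b₀ = χ h • b₀) (g : G) (x : X) :
    ρ (s x) b₀ = χ (r (g⁻¹ * s x)) • ρ g (ρ (s (p (g⁻¹ * s x))) b₀) := by
  set y := p (g⁻¹ * s x)
  set h := r (g⁻¹ * s x)
  have hsx : s x = g * (s y * (h : G)) := by rw [← hdecomp, mul_inv_cancel_left]
  calc ρ (s x) b₀ = ρ g (ρ (s y) (ρ (h : G) b₀)) := by
        rw [hsx, map_mul, map_mul]
        rfl
    _ = χ h • ρ g (ρ (s y) b₀) := by rw [hb₀, map_smul, map_smul]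

theorem inducedAction_smul_map_section_apply (hdecomp : ∀ g : G, g = s (p g) * (r g : G))
    (hχ : ∀ h : H, χ h ≠ 0) (hb₀ : ∀ h : H, ρ (h : G) b₀ = χ h • b₀)
    (g : G) (f : X → 𝕜) (x : X) :
    inducedAction s p r χ g f x • ρ (s x) b₀ =
      ρ g (f (p (g⁻¹ * s x)) • ρ (s (p (g⁻¹ * s x))) b₀) := by
  rw [inducedAction, map_section_apply_eq_smul hdecomp hb₀ g x, smul_smul, mul_right_comm,
    inv_mul_cancel₀ (hχ _), one_mul, map_smul]

end InducedAction

theorem integral_comp_of_measurePreserving {α β E : Type*} [MeasurableSpace α]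
    [MeasurableSpace β] [NormedAddCommGroup E] [NormedSpace ℝ E] {μ : Measure α} {ν : Measure β}
    {T : α → β} (hT : MeasurePreserving T μ ν) {F : β → E} (hF : AEStronglyMeasurable F ν) :
    ∫ x, F (T x) ∂μ = ∫ y, F y ∂ν := by
  rw [← hT.map_eq] at hF ⊢
  exact (integral_map hT.aemeasurable hF).symm

section InverseWaveletTransform

variable {G X 𝕜 B : Type*} [Group G] [MeasurableSpace X] [RCLike 𝕜]
  [NormedAddCommGroup B] [NormedSpace ℝ B] [NormedSpace 𝕜 B]

/-- The inverse wavelet transform `Mf` with vacuum vector `b₀`. As a Bochner integral, it takes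
the junk value `0` when `x ↦ f x • ρ (s x) b₀` is not integrable. -/
noncomputable def inverseWaveletTransform (μ : Measure X) (s : X → G) (ρ : G →* (B ≃L[𝕜] B))
    (b₀ : B) (f : X → 𝕜) : B :=
  ∫ x, f x • ρ (s x) b₀ ∂μ

theorem inverse_wavelet_transform_intertwines_general [CompleteSpace B] {H : Subgroup G}
    {μ : Measure X} {s : X → G} {p : G → X} {r : G → H}
    (hdecomp : ∀ g : G, g = s (p g) * (r g : G))
    {ρ : G →* (B ≃L[𝕜] B)} {χ : H → 𝕜} (hχ : ∀ h : H, χ h ≠ 0)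
    {b₀ : B} (hb₀ : ∀ h : H, ρ (h : G) b₀ = χ h • b₀)
    {g : G} (hmp : MeasurePreserving (fun x ↦ p (g⁻¹ * s x)) μ μ)
    {f : X → 𝕜} (hf : Integrable (fun x ↦ f x • ρ (s x) b₀) μ) :
    Integrable (fun x ↦ inducedAction s p r χ g f x • ρ (s x) b₀) μ ∧
      inverseWaveletTransform μ s ρ b₀ (inducedAction s p r χ g f) =
        ρ g (inverseWaveletTransform μ s ρ b₀ f) := by
  let L : B →L[𝕜] B := ρ g
  let F : X → B := fun x ↦ f x • ρ (s x) b₀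
  let T : X → X := fun x ↦ p (g⁻¹ * s x)
  have hintegrand : (fun x ↦ inducedAction s p r χ g f x • ρ (s x) b₀) = fun x ↦ L (F (T x)) :=
    funext (inducedAction_smul_map_section_apply hdecomp hχ hb₀ g f)
  have hFT : Integrable (fun x ↦ F (T x)) μ := hmp.integrable_comp_of_integrable hf
  refine ⟨hintegrand ▸ L.integrable_comp hFT, ?_⟩
  calc ∫ x, inducedAction s p r χ g f x • ρ (s x) b₀ ∂μ
      = ∫ x, L (F (T x)) ∂μ := by rw [hintegrand]
    _ = L (∫ x, F (T x) ∂μ) := L.integral_comp_comm hFT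
    _ = L (∫ x, F x ∂μ) := by
        rw [integral_comp_of_measurePreserving hmp hf.aestronglyMeasurable]

end InverseWaveletTransform

/-- If the vacuum vector `b₀` satisfies `ρ(h)b₀ = χ(h)·b₀` for
all `h ∈ H`, and for each `g ∈ G` the map `x ↦ p(g⁻¹·s(x))` is a measurable
bijection of `X` preserving `μ`, then the inverse wavelet transform
`Mf = ∫_X f(x)·ρ(s(x))b₀ dμ(x)` intertwines the induced representation
`[λ(g)f](x) = χ(r(g⁻¹·s(x)))⁻¹ · f(p(g⁻¹·s(x)))` with `ρ`:
`M(λ(g)f) = ρ(g)(Mf)` whenever both Bochner integrals exist. -/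
theorem inverse_wavelet_transform_intertwines
    {G : Type*} [Group G] (H : Subgroup G)
    {X : Type*} [MeasurableSpace X] (μ : Measure X)
    (s : X → G) (p : G → X) (r : G → H)
    (hdecomp : ∀ g : G, g = s (p g) * (r g : G))
    (huniq : ∀ (g : G) (x : X) (h : H), g = s x * (h : G) → x = p g ∧ h = r g)
    {B : Type*} [NormedAddCommGroup B] [NormedSpace ℂ B] [CompleteSpace B]
    (ρ : G →* (B ≃L[ℂ] B)) (χ : H → ℂ) (hχ : ∀ h : H, χ h ≠ 0)
    (b₀ : B)
    (hb₀ : ∀ h : H, ρ (h : G) b₀ = χ h • b₀)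
    (hmp : ∀ g : G,
      MeasurePreserving (fun x : X => p (g⁻¹ * s x)) μ μ ∧
      Function.Bijective (fun x : X => p (g⁻¹ * s x))) :
    ∀ (g : G) (f : X → ℂ),
      Integrable (fun x : X => f x • ρ (s x) b₀) μ →
      Integrable (fun x : X =>
        ((χ (r (g⁻¹ * s x)))⁻¹ * f (p (g⁻¹ * s x))) • ρ (s x) b₀) μ →
      (∫ x : X, ((χ (r (g⁻¹ * s x)))⁻¹ * f (p (g⁻¹ * s x))) • ρ (s x) b₀ ∂μ)
        = ρ g (∫ x : X, f x • ρ (s x) b₀ ∂μ) := by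
  intro g f hf _
  exact (inverse_wavelet_transform_intertwines_general hdecomp hχ hb₀ (hmp g).1 hf).2
end

section
/- For every ℏ > 0 the Schrödinger representation is a unitary representation of the Heisenberg group: each operator σ_ℏ(s,x,y) is a surjective linear isometry of L²(ℝ,ℂ), and σ_ℏ(g·g') = σ_ℏ(g)∘σ_ℏ(g') for all g, g' in the Heisenberg group. -/
open MeasureTheory

/-- The multiplication law of the one-dimensional Heisenberg group `H¹ = ℝ³`:
`(s,x,y)·(s',x',y') = (s+s'+(xy'−yx')/2, x+x', y+y')`. -/
noncomputable def heisMul (g g' : ℝ × ℝ × ℝ) : ℝ × ℝ × ℝ :=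
  (g.1 + g'.1 + (g.2.1 * g'.2.2 - g.2.2 * g'.2.1) / 2, g.2.1 + g'.2.1, g.2.2 + g'.2.2)

/-!
`σ_ℏ(g)` translates by `√(2ℏ)·x` and then multiplies by the circle-valued function
`t ↦ exp(iθ_g(t))`. Translating preserves Lebesgue measure and multiplying by a circle-valued
function preserves norms pointwise, so both are invertible isometries, on every `Lᵖ(ℝ, E)`.
Translations compose additively, so the homomorphism law reduces to the cocycle identity
`θ_{gg'}(t) = θ_g(t) + θ_{g'}(t − √(2ℏ)·x)`.
-/

section WeightedComposition

variable {α β γ E : Type*} [MeasurableSpace α] [MeasurableSpace β] [MeasurableSpace γ]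
  {μ : Measure α} {ν : Measure β} {ρ : Measure γ} {p : ENNReal}
  [NormedAddCommGroup E] [NormedSpace ℂ E]

lemma memLp_circle_smul {u : α → Circle} (hu : AEStronglyMeasurable u μ) {f : α → E}
    (hf : MemLp f p μ) : MemLp (fun a => u a • f a) p μ :=
  hf.congr_norm (hu.smul hf.1) (.of_forall fun a => (Circle.norm_smul (u a) (f a)).symm)

variable [Fact (1 ≤ p)]

/-- Multiplication by an almost everywhere strongly measurable circle-valued function, as a linear
isometry of `Lᵖ`. -/
noncomputable def circleSMulₗᵢ (u : α → Circle) (hu : AEStronglyMeasurable u μ) :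
    Lp E p μ →ₗᵢ[ℂ] Lp E p μ where
  toFun f := (memLp_circle_smul hu (Lp.memLp f)).toLp _
  map_add' f g := by
    rw [← MemLp.toLp_add, MemLp.toLp_eq_toLp_iff]
    filter_upwards [Lp.coeFn_add f g] with a ha
    simp only [ha, Pi.add_apply, smul_add]
  map_smul' c f := by
    rw [RingHom.id_apply, ← MemLp.toLp_const_smul, MemLp.toLp_eq_toLp_iff]
    filter_upwards [Lp.coeFn_smul c f] with a ha
    rw [ha, Pi.smul_apply, Pi.smul_apply, smul_comm]
  norm_map' f := by
    change ‖(memLp_circle_smul hu (Lp.memLp f)).toLp _‖ = ‖f‖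
    rw [Lp.norm_toLp, Lp.norm_def]
    exact congrArg ENNReal.toReal
      (eLpNorm_congr_norm_ae (.of_forall fun a => Circle.norm_smul (u a) (f a)))

lemma coeFn_circleSMulₗᵢ (u : α → Circle) (hu : AEStronglyMeasurable u μ) (f : Lp E p μ) :
    circleSMulₗᵢ u hu f =ᵐ[μ] fun a => u a • f a :=
  MemLp.coeFn_toLp (memLp_circle_smul hu (Lp.memLp f))

/-- The weighted composition operator `f ↦ u • (f ∘ φ)` from `Lᵖ(ν)` to `Lᵖ(μ)`, for `u`
circle-valued and `φ` measure preserving. -/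
noncomputable def weightedCompₗᵢ (u : α → Circle) (hu : AEStronglyMeasurable u μ) (φ : α → β)
    (hφ : MeasurePreserving φ μ ν) : Lp E p ν →ₗᵢ[ℂ] Lp E p μ :=
  (circleSMulₗᵢ u hu).comp (Lp.compMeasurePreservingₗᵢ ℂ φ hφ)

lemma coeFn_weightedCompₗᵢ (u : α → Circle) (hu : AEStronglyMeasurable u μ) {φ : α → β}
    (hφ : MeasurePreserving φ μ ν) (f : Lp E p ν) :
    weightedCompₗᵢ u hu φ hφ f =ᵐ[μ] fun a => u a • f (φ a) := by
  filter_upwards [coeFn_circleSMulₗᵢ u hu (Lp.compMeasurePreserving φ hφ f),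
    Lp.coeFn_compMeasurePreserving f hφ] with a hsmul hcomp
  exact hsmul.trans (congrArg (u a • ·) hcomp)

lemma coeFn_weightedCompₗᵢ_weightedCompₗᵢ (u : α → Circle) (hu : AEStronglyMeasurable u μ)
    (v : β → Circle) (hv : AEStronglyMeasurable v ν) {φ : α → β} (hφ : MeasurePreserving φ μ ν)
    {ψ : β → γ} (hψ : MeasurePreserving ψ ν ρ) (f : Lp E p ρ) :
    weightedCompₗᵢ u hu φ hφ (weightedCompₗᵢ v hv ψ hψ f) =ᵐ[μ]
      fun a => (u a * v (φ a)) • f (ψ (φ a)) := by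
  filter_upwards [coeFn_weightedCompₗᵢ u hu hφ (weightedCompₗᵢ v hv ψ hψ f),
    hφ.quasiMeasurePreserving.ae_eq_comp (coeFn_weightedCompₗᵢ v hv hψ f)] with a hu_apply hv_apply
  rw [hu_apply, mul_smul]
  exact congrArg (u a • ·) hv_apply

lemma weightedCompₗᵢ_surjective (u : α → Circle) (hu : AEStronglyMeasurable u μ) (e : α ≃ᵐ β)
    (he : MeasurePreserving e μ ν) :
    Function.Surjective (weightedCompₗᵢ (E := E) (p := p) u hu e he) := by
  intro f
  have hv : AEStronglyMeasurable (fun b => (u (e.symm b))⁻¹) ν :=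
    (hu.comp_measurePreserving he.symm).inv
  refine ⟨weightedCompₗᵢ _ hv e.symm he.symm f, Lp.ext ?_⟩
  filter_upwards [coeFn_weightedCompₗᵢ_weightedCompₗᵢ u hu _ hv he he.symm f] with a ha
  rw [ha, e.symm_apply_apply, mul_inv_cancel, one_smul]

end WeightedComposition

section Schrodinger

/-- The real phase `θ_g` of the Schrödinger operator
`[σ_ℏ(g)f](t) = exp(iθ_g(t))·f(t − √(2ℏ)·x)`, where `g = (s,x,y)`. -/
noncomputable def schrodingerPhase (ℏ : ℝ) (g : ℝ × ℝ × ℝ) (t : ℝ) : ℝ :=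
  2 * g.1 * ℏ - √(2 * ℏ) * g.2.2 * t + ℏ * g.2.1 * g.2.2

lemma continuous_exp_schrodingerPhase (ℏ : ℝ) (g : ℝ × ℝ × ℝ) :
    Continuous fun t => Circle.exp (schrodingerPhase ℏ g t) := by
  unfold schrodingerPhase
  fun_prop

lemma schrodingerPhase_heisMul {ℏ : ℝ} (hℏ : 0 ≤ ℏ) (g g' : ℝ × ℝ × ℝ) (t : ℝ) :
    schrodingerPhase ℏ (heisMul g g') t =
      schrodingerPhase ℏ g t + schrodingerPhase ℏ g' (t - √(2 * ℏ) * g.2.1) := by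
  have hsq : √(2 * ℏ) * √(2 * ℏ) = 2 * ℏ := Real.mul_self_sqrt (by positivity)
  simp only [schrodingerPhase, heisMul]
  linear_combination (-g.2.1 * g'.2.2) * hsq

variable {E : Type*} [NormedAddCommGroup E] [NormedSpace ℂ E] {p : ENNReal} [Fact (1 ≤ p)]

/-- The Schrödinger operator `σ_ℏ(g)`, as a linear isometric automorphism of `Lᵖ(ℝ, E)`. -/
noncomputable def schrodingerEquiv (ℏ : ℝ) (g : ℝ × ℝ × ℝ) :
    Lp E p (volume : Measure ℝ) ≃ₗᵢ[ℂ] Lp E p (volume : Measure ℝ) :=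
  .ofSurjective _ <| weightedCompₗᵢ_surjective (fun t => Circle.exp (schrodingerPhase ℏ g t))
    (continuous_exp_schrodingerPhase ℏ g).aestronglyMeasurable
    (.subRight (√(2 * ℏ) * g.2.1)) (measurePreserving_sub_right volume _)

lemma coeFn_schrodingerEquiv (ℏ : ℝ) (g : ℝ × ℝ × ℝ) (f : Lp E p (volume : Measure ℝ)) :
    schrodingerEquiv ℏ g f =ᵐ[volume]
      fun t => Circle.exp (schrodingerPhase ℏ g t) • f (t - √(2 * ℏ) * g.2.1) :=
  coeFn_weightedCompₗᵢ _ (continuous_exp_schrodingerPhase ℏ g).aestronglyMeasurable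
    (measurePreserving_sub_right volume _) f

lemma schrodingerEquiv_heisMul {ℏ : ℝ} (hℏ : 0 ≤ ℏ) (g g' : ℝ × ℝ × ℝ)
    (f : Lp E p (volume : Measure ℝ)) :
    schrodingerEquiv ℏ (heisMul g g') f = schrodingerEquiv ℏ g (schrodingerEquiv ℏ g' f) := by
  have translation_add (t : ℝ) : t - √(2 * ℏ) * (heisMul g g').2.1 =
      t - √(2 * ℏ) * g.2.1 - √(2 * ℏ) * g'.2.1 := by
    simp only [heisMul]
    ring
  apply Lp.ext
  calc schrodingerEquiv ℏ (heisMul g g') f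
      =ᵐ[volume] fun t => Circle.exp (schrodingerPhase ℏ (heisMul g g') t) •
        f (t - √(2 * ℏ) * (heisMul g g').2.1) := coeFn_schrodingerEquiv ..
    _ = fun t => (Circle.exp (schrodingerPhase ℏ g t) *
          Circle.exp (schrodingerPhase ℏ g' (t - √(2 * ℏ) * g.2.1))) •
        f (t - √(2 * ℏ) * g.2.1 - √(2 * ℏ) * g'.2.1) := by
      simp only [schrodingerPhase_heisMul hℏ, Circle.exp_add, translation_add]
    _ =ᵐ[volume] schrodingerEquiv ℏ g (schrodingerEquiv ℏ g' f) :=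
      (coeFn_weightedCompₗᵢ_weightedCompₗᵢ
        _ (continuous_exp_schrodingerPhase ℏ g).aestronglyMeasurable
        _ (continuous_exp_schrodingerPhase ℏ g').aestronglyMeasurable
        (measurePreserving_sub_right volume _) (measurePreserving_sub_right volume _) f).symm

end Schrodinger

theorem schrodinger_representation_unitary_general {E : Type*} [NormedAddCommGroup E]
    [NormedSpace ℂ E] {p : ENNReal} [Fact (1 ≤ p)] {ℏ : ℝ} (hℏ : 0 ≤ ℏ) :
    ∃ σ : ℝ × ℝ × ℝ → (Lp E p (volume : Measure ℝ) ≃ₗᵢ[ℂ] Lp E p (volume : Measure ℝ)),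
      (∀ (s x y : ℝ) (f : Lp E p (volume : Measure ℝ)),
        (σ (s, x, y) f : ℝ → E) =ᵐ[volume] fun t : ℝ =>
          Complex.exp (Complex.I *
              ((2 * s * ℏ - Real.sqrt (2 * ℏ) * y * t + ℏ * x * y : ℝ) : ℂ)) •
            (f : ℝ → E) (t - Real.sqrt (2 * ℏ) * x)) ∧
      (∀ (g g' : ℝ × ℝ × ℝ) (f : Lp E p (volume : Measure ℝ)),
        σ (heisMul g g') f = σ g (σ g' f)) := by
  refine ⟨schrodingerEquiv ℏ, fun s x y f => ?_, schrodingerEquiv_heisMul hℏ⟩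
  filter_upwards [coeFn_schrodingerEquiv ℏ (s, x, y) f] with t ht
  rw [ht, Circle.smul_def, Circle.coe_exp, mul_comm, schrodingerPhase]

/-- For every `ℏ > 0` the Schrödinger representation
`[σ_ℏ(s,x,y)f](t) = exp(i(2sℏ − √(2ℏ)·y·t + ℏ·x·y))·f(t − √(2ℏ)·x)` is a
unitary representation of the Heisenberg group on `L²(ℝ,ℂ)`: each operator is a
surjective linear isometry and `σ_ℏ(g·g') = σ_ℏ(g)∘σ_ℏ(g')`. -/
theorem schrodinger_representation_unitary :
    ∀ ℏ : ℝ, 0 < ℏ →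
      ∃ σ : ℝ × ℝ × ℝ → (Lp ℂ 2 (volume : Measure ℝ) ≃ₗᵢ[ℂ] Lp ℂ 2 (volume : Measure ℝ)),
        (∀ (s x y : ℝ) (f : Lp ℂ 2 (volume : Measure ℝ)),
          (σ (s, x, y) f : ℝ → ℂ) =ᵐ[volume] fun t : ℝ =>
            Complex.exp (Complex.I *
                ((2 * s * ℏ - Real.sqrt (2 * ℏ) * y * t + ℏ * x * y : ℝ) : ℂ)) *
              (f : ℝ → ℂ) (t - Real.sqrt (2 * ℏ) * x)) ∧
        (∀ (g g' : ℝ × ℝ × ℝ) (f : Lp ℂ 2 (volume : Measure ℝ)),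
          σ (heisMul g g') f = σ g (σ g' f)) :=
  fun _ hℏ => schrodinger_representation_unitary_general hℏ.le
end

section
/- Spectral mapping theorem for the jet-valued spectrum of a matrix: let φ(z) = Σ_{n≥0} c_n·zⁿ be a complex power series with radius of convergence R ∈ (0, ∞], and let A be an N×N complex matrix whose spectral radius is strictly less than R, so that φ(A) = Σ_{n≥0} c_n·Aⁿ converges. Let λ ∈ ℂ, x ∈ ℂᴺ and k ≥ 1 satisfy (A − λI)ᵏx = 0 and (A − λI)^{k−1}x ≠ 0 (so x is a root vector of order k for the eigenvalue λ, and |λ| < R). Suppose d ≥ 1 is such that the derivatives φ⁽ʲ⁾(λ) = 0 for all 1 ≤ j < d while φ⁽ᵈ⁾(λ) ≠ 0 (i.e. d is the degree of the zero of φ(z) − φ(λ) at z = λ). Then for every integer m ≥ 0, (φ(A) − φ(λ)·I)ᵐ x = 0 if and only if m·d ≥ k; in particular x is a root vector of φ(A) for the eigenvalue φ(λ) of order exactly ⌈k/d⌉. -/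
open Matrix

/-!
Put `B = T - λ`. On `ker Bᵏ` the operator `φ(T)` acts as a polynomial in `B`: expanding
`Tⁿ = (B + λ)ⁿ` binomially and exchanging the two sums turns `Σ cₙ Tⁿ v` into the Taylor expansion
of `φ` at `λ`, evaluated at `B` and applied to `v`. Hence `φ(T) - φ(λ)` acts as a polynomial `q`
with zero of order exactly `d` at the origin. The polynomials annihilating a root vector `x` of
order `k` are the multiples of `Xᵏ`, so `(φ(T) - φ(λ))ᵐ x = 0` iff `Xᵏ ∣ qᵐ`, that is, iff
`k ≤ m * d`.
-/

section Polynomial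

open Polynomial

theorem emultiplicity_X_eq_natCast_iff {R : Type*} [Semiring R] {p : R[X]} {d : ℕ} :
    emultiplicity X p = d ↔ (∀ j < d, p.coeff j = 0) ∧ p.coeff d ≠ 0 := by
  rw [emultiplicity_eq_coe, X_pow_dvd_iff, X_pow_dvd_iff]
  grind

section Semiring

variable {R M : Type*} [CommSemiring R] [AddCommMonoid M] [Module R M] {B S : Module.End R M}
  {x : M} {k : ℕ}

theorem aeval_apply_eq_sum_range_of_pow_apply_eq_zero (h : (B ^ k) x = 0) (p : R[X]) :
    aeval B p x = ∑ j ∈ Finset.range k, p.coeff j • (B ^ j) x := by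
  rw [aeval_eq_sum_range' (n := k + (p.natDegree + 1)) (by lia), LinearMap.sum_apply]
  refine (Finset.sum_subset (Finset.range_mono (by lia)) fun j _ hj => ?_).symm
  rw [LinearMap.smul_apply, Module.End.pow_map_zero_of_le (by simpa using hj) h, smul_zero]

theorem pow_apply_eq_aeval_pow_apply {p : R[X]}
    (hS : ∀ v, (B ^ k) v = 0 → S v = aeval B p v) (hx : (B ^ k) x = 0) (m : ℕ) :
    (S ^ m) x = aeval B (p ^ m) x := by
  induction m with
  | zero => simp
  | succ m ih =>
    have hker : (B ^ k) (aeval B (p ^ m) x) = 0 := by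
      have hcomm : Commute (B ^ k) (aeval B (p ^ m)) := by
        simpa using (Commute.all (X ^ k) (p ^ m)).map (aeval B)
      rw [← Module.End.mul_apply, hcomm.eq, Module.End.mul_apply, hx, map_zero]
    rw [pow_succ', Module.End.mul_apply, ih, hS _ hker, ← Module.End.mul_apply, ← map_mul,
      ← pow_succ']

end Semiring

section Ring

variable {R M : Type*} [CommRing R] [AddCommGroup M] [Module R M] {B S T : Module.End R M}
  {x : M} {k : ℕ}

theorem pow_apply_eq_sum_range_choose {μ : R}
    (h : ((T - μ • (1 : Module.End R M)) ^ k) x = 0) (n : ℕ) :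
    (T ^ n) x = ∑ j ∈ Finset.range k,
      (μ ^ (n - j) * (n.choose j : R)) • ((T - μ • (1 : Module.End R M)) ^ j) x := by
  have htaylor : aeval (T - μ • (1 : Module.End R M)) ((X + C μ) ^ n) = T ^ n := by
    simp [Algebra.algebraMap_eq_smul_one]
  rw [← htaylor, aeval_apply_eq_sum_range_of_pow_apply_eq_zero h]
  simp only [coeff_X_add_C_pow]

theorem aeval_apply_eq_zero_iff_X_pow_dvd [IsDomain R] [Module.IsTorsionFree R M]
    (h0 : (B ^ k) x = 0) (h1 : (B ^ (k - 1)) x ≠ 0) (p : R[X]) :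
    aeval B p x = 0 ↔ X ^ k ∣ p := by
  constructor
  · intro hp
    suffices ∀ j ≤ k, X ^ j ∣ p from this k le_rfl
    intro j hj
    induction j with
    | zero => simp
    | succ j ih =>
      obtain ⟨u, rfl⟩ := ih (by lia)
      have hlast : B ((B ^ (k - 1)) x) = 0 := by
        rwa [← Module.End.mul_apply, ← pow_succ', show k - 1 + 1 = k by lia]
      have hu : u.coeff 0 • (B ^ (k - 1)) x = 0 := by
        calc
          u.coeff 0 • (B ^ (k - 1)) x = aeval B u ((B ^ (k - 1)) x) := by
            simp [aeval_apply_eq_sum_range_of_pow_apply_eq_zero (k := 1) (by simpa using hlast)]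
          _ = aeval B (u * X ^ (k - 1)) x := by simp
          _ = aeval B (X ^ (k - 1 - j) * (X ^ j * u)) x := by
            rw [← mul_assoc, ← pow_add, show k - 1 - j + j = k - 1 by lia, mul_comm]
          _ = 0 := by rw [map_mul, Module.End.mul_apply, hp, map_zero]
      rw [pow_succ]
      exact mul_dvd_mul_left _ (X_dvd_iff.2 ((smul_eq_zero.1 hu).resolve_right h1))
  · rintro ⟨u, rfl⟩
    simp [mul_comm (X ^ k) u, h0]

theorem pow_apply_eq_zero_iff_of_eq_aeval [IsDomain R] [Module.IsTorsionFree R M] {p : R[X]}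
    {d : ℕ} (h0 : (B ^ k) x = 0) (h1 : (B ^ (k - 1)) x ≠ 0)
    (hS : ∀ v, (B ^ k) v = 0 → S v = aeval B p v) (hp : emultiplicity X p = d) (m : ℕ) :
    (S ^ m) x = 0 ↔ k ≤ m * d := by
  rw [pow_apply_eq_aeval_pow_apply hS h0, aeval_apply_eq_zero_iff_X_pow_dvd h0 h1,
    pow_dvd_iff_le_emultiplicity, emultiplicity_pow prime_X, hp]
  norm_cast

theorem mem_spectrum_of_pow_sub_smul_one_apply_eq_zero {μ : R}
    (h : ((T - μ • (1 : Module.End R M)) ^ k) x = 0) (hx : x ≠ 0) : μ ∈ spectrum R T :=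
  have hgen : T.HasGenEigenvector μ k x := ⟨Module.End.mem_genEigenspace_nat.2 h, hx⟩
  (hgen.hasUnifEigenvalue.lt one_pos).mem_spectrum

end Ring

end Polynomial

section PowerSeries

variable {𝕜 E : Type*} [NontriviallyNormedField 𝕜] [NormedAddCommGroup E] [NormedSpace 𝕜 E]

open FormalMultilinearSeries

theorem changeOriginSeries_apply_one_eq_smul_coeff (p : FormalMultilinearSeries 𝕜 𝕜 E)
    (z : 𝕜) (j l : ℕ) :
    p.changeOriginSeries j l (fun _ => z) 1 =
      (z ^ l * ((j + l).choose j : 𝕜)) • p.coeff (j + l) := by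
  have hterm (s : {s : Finset (Fin (j + l)) // s.card = l}) :
      p.changeOriginSeriesTerm j l s s.2 (fun _ => z) 1 = z ^ l • p.coeff (j + l) := by
    rw [Pi.one_def, changeOriginSeriesTerm_apply, apply_eq_prod_smul_coeff,
      Finset.prod_piecewise]
    simp [s.2]
  simp only [changeOriginSeries, _root_.sum_apply, hterm]
  simp [← Nat.choose_symm_add, ← Nat.cast_smul_eq_nsmul 𝕜, smul_smul, mul_comm]

theorem hasSum_coeff_changeOrigin [CompleteSpace E] {p : FormalMultilinearSeries 𝕜 𝕜 E} {z : 𝕜}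
    (hz : ‖z‖ₑ < p.radius) (j : ℕ) :
    HasSum (fun n => (z ^ (n - j) * (n.choose j : 𝕜)) • p.coeff n)
      ((p.changeOrigin z).coeff j) := by
  have hsum : HasSum (fun l => p.changeOriginSeries j l fun _ => z) (p.changeOrigin z j) := by
    simpa using (p.hasFPowerSeriesOnBall_changeOrigin j (pos_of_gt hz)).hasSum (y := z)
      (by simpa using hz)
  have hshift : HasSum (fun l => (z ^ l * ((j + l).choose j : 𝕜)) • p.coeff (j + l))
      ((p.changeOrigin z).coeff j) := by
    simp only [← changeOriginSeries_apply_one_eq_smul_coeff]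
    exact hsum.mapL (ContinuousMultilinearMap.apply 𝕜 (fun _ : Fin j => 𝕜) E 1)
  refine ((add_right_injective j).hasSum_iff fun n hn => ?_).1
    (by simpa [Function.comp_def] using hshift)
  have hnj : n < j := by
    by_contra! hjn
    exact hn ⟨n - j, by simp [hjn]⟩
  simp [Nat.choose_eq_zero_of_lt hnj]

theorem coeff_eq_zero_and_ne_zero_of_analyticOrderAt_eq {f : 𝕜 → E}
    {p : FormalMultilinearSeries 𝕜 𝕜 E} {z : 𝕜} {d : ℕ} (hf : HasFPowerSeriesAt f p z)
    (hd : analyticOrderAt f z = d) : (∀ j < d, p.coeff j = 0) ∧ p.coeff d ≠ 0 := by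
  have hp : p ≠ 0 := by
    rintro rfl
    rw [analyticOrderAt_eq_top.2 (hf.locally_zero_iff.2 rfl)] at hd
    exact ENat.top_ne_natCast d hd
  have horder : p.order = d := by
    rw [← Nat.cast_inj (R := ℕ∞), ← hd, eq_comm, hf.analyticAt.analyticOrderAt_eq_natCast]
    exact ⟨_, (HasFPowerSeriesAt.has_fpower_series_iterate_dslope_fslope _ hf).analyticAt,
      hf.iterate_dslope_fslope_ne_zero hp, .of_forall hf.eq_pow_order_mul_iterate_dslope⟩
  simp only [coeff_eq_zero, ne_eq, ← horder]
  exact ⟨fun j hj => apply_eq_zero_of_lt_order hj, apply_order_ne_zero hp⟩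

end PowerSeries

section TopologicalModule

variable {𝕜 V : Type*} [NontriviallyNormedField 𝕜] [CompleteSpace 𝕜] [AddCommGroup V]
  [Module 𝕜 V] [TopologicalSpace V] [ContinuousAdd V] [ContinuousSMul 𝕜 V]
  {T S : Module.End 𝕜 V} {lam : 𝕜} {x : V} {k d : ℕ}

theorem hasSum_coeff_smul_pow_apply {p : FormalMultilinearSeries 𝕜 𝕜 𝕜} (hlam : ‖lam‖ₑ < p.radius)
    {v : V} (hv : ((T - lam • (1 : Module.End 𝕜 V)) ^ k) v = 0) :
    HasSum (fun n => p.coeff n • (T ^ n) v)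
      (∑ j ∈ Finset.range k,
        (p.changeOrigin lam).coeff j • ((T - lam • (1 : Module.End 𝕜 V)) ^ j) v) := by
  have hsum := hasSum_sum fun j (_ : j ∈ Finset.range k) =>
    (hasSum_coeff_changeOrigin hlam j).smul_const (((T - lam • (1 : Module.End 𝕜 V)) ^ j) v)
  refine hsum.congr_fun fun n => ?_
  rw [pow_apply_eq_sum_range_choose hv, Finset.smul_sum]
  exact Finset.sum_congr rfl fun j _ => by simp only [smul_smul, smul_eq_mul, mul_comm]

variable [T2Space V] {R : ENNReal}

theorem pow_apply_eq_zero_iff_of_analyticOrderAt_eq {ψ : 𝕜 → 𝕜}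
    {p : FormalMultilinearSeries 𝕜 𝕜 𝕜} (hψ : HasFPowerSeriesOnBall ψ p 0 R) (hlam : ‖lam‖ₑ < R)
    (hS : ∀ v, ((T - lam • (1 : Module.End 𝕜 V)) ^ k) v = 0 →
      HasSum (fun n => p.coeff n • (T ^ n) v) (S v))
    (hx1 : ((T - lam • (1 : Module.End 𝕜 V)) ^ k) x = 0)
    (hx2 : ((T - lam • (1 : Module.End 𝕜 V)) ^ (k - 1)) x ≠ 0)
    (hd : analyticOrderAt ψ lam = d) (m : ℕ) :
    (S ^ m) x = 0 ↔ k ≤ m * d := by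
  -- Degrees below `k` determine `S` on the kernel; degree `d`, which may exceed `k`, is kept so
  -- that `X` divides the truncation exactly `d` times.
  set taylor : Polynomial 𝕜 :=
    PowerSeries.trunc (k + d + 1) (PowerSeries.mk (p.changeOrigin lam).coeff)
  have hcoeff {j : ℕ} (hj : j < k + d + 1) : taylor.coeff j = (p.changeOrigin lam).coeff j := by
    simp [taylor, PowerSeries.coeff_trunc, hj]
  have hS_taylor (v : V) (hv : ((T - lam • (1 : Module.End 𝕜 V)) ^ k) v = 0) :
      S v = Polynomial.aeval (T - lam • (1 : Module.End 𝕜 V)) taylor v := by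
    rw [(hS v hv).unique (hasSum_coeff_smul_pow_apply (hlam.trans_le hψ.r_le) hv),
      aeval_apply_eq_sum_range_of_pow_apply_eq_zero hv]
    exact Finset.sum_congr rfl fun j hj => by rw [hcoeff (by grind)]
  have horder : emultiplicity Polynomial.X taylor = d := by
    have hψlam : HasFPowerSeriesAt ψ (p.changeOrigin lam) lam := by
      simpa using (hψ.changeOrigin hlam).hasFPowerSeriesAt
    obtain ⟨hlow, htop⟩ := coeff_eq_zero_and_ne_zero_of_analyticOrderAt_eq hψlam hd
    refine emultiplicity_X_eq_natCast_iff.2 ⟨fun j hj => ?_, ?_⟩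
    · rw [hcoeff (by lia), hlow j hj]
    · rwa [hcoeff (by lia)]
  exact pow_apply_eq_zero_iff_of_eq_aeval hx1 hx2 hS_taylor horder m

open FormalMultilinearSeries in
theorem sub_pow_apply_eq_zero_iff_of_analyticOrderAt_eq {φ : 𝕜 → 𝕜}
    {p : FormalMultilinearSeries 𝕜 𝕜 𝕜} (hφ : HasFPowerSeriesOnBall φ p 0 R) (hlam : ‖lam‖ₑ < R)
    (hS : ∀ v, ((T - lam • (1 : Module.End 𝕜 V)) ^ k) v = 0 →
      HasSum (fun n => p.coeff n • (T ^ n) v) (S v))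
    (hx1 : ((T - lam • (1 : Module.End 𝕜 V)) ^ k) x = 0)
    (hx2 : ((T - lam • (1 : Module.End 𝕜 V)) ^ (k - 1)) x ≠ 0)
    (hd : analyticOrderAt (fun z => φ z - φ lam) lam = d) (m : ℕ) :
    ((S - φ lam • (1 : Module.End 𝕜 V)) ^ m) x = 0 ↔ k ≤ m * d := by
  have hψ := hφ.sub (hasFPowerSeriesOnBall_const (c := φ lam).mono hφ.r_pos le_top)
  refine pow_apply_eq_zero_iff_of_analyticOrderAt_eq hψ hlam (fun v hv => ?_) hx1 hx2 hd m
  have hconst : HasSum (fun n => (constFormalMultilinearSeries 𝕜 𝕜 (φ lam)).coeff n • (T ^ n) v)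
      (φ lam • v) := by
    simpa [coeff, constFormalMultilinearSeries] using hasSum_single
      (f := fun n => (constFormalMultilinearSeries 𝕜 𝕜 (φ lam)).coeff n • (T ^ n) v) 0
      fun n hn => by simp [coeff, constFormalMultilinearSeries_apply_of_nonzero hn]
  have : IsTopologicalAddGroup V := { ContinuousNeg.of_continuousConstSMul 𝕜 V with }
  exact ((hS v hv).sub hconst).congr_fun fun n => sub_smul (p.coeff n) _ _

theorem jet_spectral_mapping_general {φ : 𝕜 → 𝕜}
    {p : FormalMultilinearSeries 𝕜 𝕜 𝕜} (hφ : HasFPowerSeriesOnBall φ p 0 R) (hlam : ‖lam‖ₑ < R)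
    (hS : ∀ v, ((T - lam • (1 : Module.End 𝕜 V)) ^ k) v = 0 →
      HasSum (fun n => p.coeff n • (T ^ n) v) (S v))
    (hx1 : ((T - lam • (1 : Module.End 𝕜 V)) ^ k) x = 0)
    (hx2 : ((T - lam • (1 : Module.End 𝕜 V)) ^ (k - 1)) x ≠ 0)
    (hd : analyticOrderAt (fun z => φ z - φ lam) lam = d) :
    (∀ m : ℕ, ((S - φ lam • (1 : Module.End 𝕜 V)) ^ m) x = 0 ↔ k ≤ m * d) ∧
      ((S - φ lam • (1 : Module.End 𝕜 V)) ^ (k ⌈/⌉ d)) x = 0 ∧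
      ((S - φ lam • (1 : Module.End 𝕜 V)) ^ (k ⌈/⌉ d - 1)) x ≠ 0 := by
  have hiff := sub_pow_apply_eq_zero_iff_of_analyticOrderAt_eq hφ hlam hS hx1 hx2 hd
  have hk : 0 < k := by
    by_contra! hk
    exact hx2 (by simpa [nonpos_iff_eq_zero.1 hk] using hx1)
  have hd_pos : 0 < d := by
    have hanalytic := (hφ.analyticAt_of_mem (y := lam) (by simpa using hlam)).fun_sub
      (analyticAt_const (v := φ lam))
    rw [← Nat.cast_pos (α := ℕ∞), ← hd, pos_iff_ne_zero, hanalytic.analyticOrderAt_ne_zero,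
      sub_self]
  have hceil (m : ℕ) : k ≤ m * d ↔ k ⌈/⌉ d ≤ m := by
    rw [ceilDiv_le_iff_le_mul hd_pos, mul_comm]
  refine ⟨hiff, (hiff _).2 ((hceil _).2 le_rfl), fun h => ?_⟩
  have hpred := (hceil _).1 ((hiff _).1 h)
  have hpos : k ⌈/⌉ d ≠ 0 := fun h0 => by simpa [hk.ne'] using (hceil 0).2 h0.le
  lia

end TopologicalModule

theorem hasFPowerSeriesOnBall_tsum_mul_pow {𝕜 : Type*} [RCLike 𝕜] {c : ℕ → 𝕜} {R : ENNReal}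
    (hR : 0 < R) (hconv : ∀ z : 𝕜, ‖z‖ₑ < R → Summable fun n => ‖c n * z ^ n‖) :
    HasFPowerSeriesOnBall (fun z => ∑' n, c n * z ^ n)
      (FormalMultilinearSeries.ofScalars 𝕜 c) 0 R where
  r_le := ENNReal.le_of_forall_nnreal_lt fun r hr =>
    FormalMultilinearSeries.le_radius_of_summable_norm _ <| by
      simpa [FormalMultilinearSeries.ofScalars_norm] using
        hconv ((r : ℝ) : 𝕜) (by simpa [enorm_eq_nnnorm] using hr)
  r_pos := hR
  hasSum {z} hz := by
    simpa [FormalMultilinearSeries.ofScalars_apply_eq, mul_comm] using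
      (hconv z (by simpa using hz)).of_norm.hasSum

theorem analyticOrderAt_sub_apply_eq_natCast_iff {𝕜 : Type*} [NontriviallyNormedField 𝕜]
    [CharZero 𝕜] [CompleteSpace 𝕜] {φ : 𝕜 → 𝕜} {z : 𝕜} {d : ℕ}
    (hφ : AnalyticAt 𝕜 φ z) (hd : 0 < d) :
    analyticOrderAt (fun w => φ w - φ z) z = d ↔
      (∀ j, 1 ≤ j → j < d → iteratedDeriv j φ z = 0) ∧ iteratedDeriv d φ z ≠ 0 := by
  have hderiv {j : ℕ} (hj : 0 < j) :
      iteratedDeriv j (fun w => φ w - φ z) z = iteratedDeriv j φ z := by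
    simp only [sub_eq_neg_add, iteratedDeriv_const_add hj]
  rw [analyticOrderAt_eq_nat_iff_iteratedDeriv_eq_zero (hφ.fun_sub analyticAt_const), hderiv hd]
  refine and_congr_left' ⟨fun h j hj hjd => hderiv hj ▸ h j hjd, fun h j hjd => ?_⟩
  rcases j.eq_zero_or_pos with rfl | hj
  · simp
  · rw [hderiv hj, h j hj hjd]

theorem hasSum_smul_pow_toLinAlgEquiv'_apply {ι K : Type*} [Fintype ι] [DecidableEq ι]
    [CommSemiring K] [TopologicalSpace K] [IsTopologicalSemiring K] {c : ℕ → K} {A B : Matrix ι ι K}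
    (h : HasSum (fun n => c n • A ^ n) B) (v : ι → K) :
    HasSum (fun n => c n • (toLinAlgEquiv' A ^ n) v) (toLinAlgEquiv' B v) := by
  simpa [Function.comp_def, mulVec.addMonoidHomLeft, smul_mulVec, ← map_pow] using
    h.map (mulVec.addMonoidHomLeft v) (continuous_id.matrix_mulVec continuous_const)

theorem toLinAlgEquiv'_sub_smul_one_pow_apply {ι K : Type*} [Fintype ι] [DecidableEq ι]
    [CommRing K] (A : Matrix ι ι K) (μ : K) (n : ℕ) (v : ι → K) :
    ((toLinAlgEquiv' A - μ • (1 : Module.End K (ι → K))) ^ n) v =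
      ((A - μ • (1 : Matrix ι ι K)) ^ n) *ᵥ v := by
  rw [← toLinAlgEquiv'_apply, map_pow, map_sub, map_smul, map_one]

/-- **spectral mapping for the jet-valued spectrum.** Let
`φ(z) = Σ c_n zⁿ` have radius of convergence `R ∈ (0,∞]`, let `A` be an `N×N`
matrix whose eigenvalues all have norm `< R` (spectral radius `< R`), so that
`φ(A) = Σ c_n Aⁿ` converges. If `x` is a root vector of `A` of order `k ≥ 1`
for the eigenvalue `λ` and `d ≥ 1` is the degree of the zero of `φ(z) − φ(λ)`
at `z = λ`, then `(φ(A) − φ(λ)·I)ᵐ x = 0 ↔ m·d ≥ k`; in particular `x` is a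
root vector of `φ(A)` for `φ(λ)` of order exactly `⌈k/d⌉`. -/
theorem jet_spectral_mapping {N : ℕ} (c : ℕ → ℂ) (R : ENNReal) (hR : 0 < R)
    (hconv : ∀ z : ℂ, (‖z‖₊ : ENNReal) < R → Summable fun n : ℕ => ‖c n * z ^ n‖)
    (A : Matrix (Fin N) (Fin N) ℂ)
    (hA : ∀ μ ∈ spectrum ℂ A, (‖μ‖₊ : ENNReal) < R)
    (hAconv : Summable fun n : ℕ => c n • A ^ n)
    (lam : ℂ) (x : Fin N → ℂ) (k : ℕ) (hk : 1 ≤ k)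
    (hx1 : ((A - lam • (1 : Matrix (Fin N) (Fin N) ℂ)) ^ k).mulVec x = 0)
    (hx2 : ((A - lam • (1 : Matrix (Fin N) (Fin N) ℂ)) ^ (k - 1)).mulVec x ≠ 0)
    (d : ℕ) (hd : 1 ≤ d)
    (hder0 : ∀ j : ℕ, 1 ≤ j → j < d →
      iteratedDeriv j (fun z : ℂ => ∑' n : ℕ, c n * z ^ n) lam = 0)
    (hderd : iteratedDeriv d (fun z : ℂ => ∑' n : ℕ, c n * z ^ n) lam ≠ 0) :
    (∀ m : ℕ,
      (((∑' n : ℕ, c n • A ^ n) -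
          (∑' n : ℕ, c n * lam ^ n) • (1 : Matrix (Fin N) (Fin N) ℂ)) ^ m).mulVec x = 0
        ↔ k ≤ m * d) ∧
    (((∑' n : ℕ, c n • A ^ n) -
        (∑' n : ℕ, c n * lam ^ n) • (1 : Matrix (Fin N) (Fin N) ℂ)) ^
          ((k + d - 1) / d)).mulVec x = 0 ∧
    (((∑' n : ℕ, c n • A ^ n) -
        (∑' n : ℕ, c n * lam ^ n) • (1 : Matrix (Fin N) (Fin N) ℂ)) ^
          ((k + d - 1) / d - 1)).mulVec x ≠ 0 := by
  have hφ := hasFPowerSeriesOnBall_tsum_mul_pow hR hconv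
  have hx0 : x ≠ 0 := by
    rintro rfl
    exact hx2 (mulVec_zero _)
  simp only [← toLinAlgEquiv'_sub_smul_one_pow_apply] at hx1 hx2 ⊢
  have hlam : ‖lam‖ₑ < R := hA lam <| by
    simpa only [AlgEquiv.spectrum_eq] using
      mem_spectrum_of_pow_sub_smul_one_apply_eq_zero hx1 hx0
  have horder := (analyticOrderAt_sub_apply_eq_natCast_iff
    (hφ.analyticAt_of_mem (by simpa using hlam)) hd).2 ⟨hder0, hderd⟩
  have hsum (v : Fin N → ℂ) := hasSum_smul_pow_toLinAlgEquiv'_apply hAconv.hasSum v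
  exact jet_spectral_mapping_general hφ hlam
    (fun v _ => by simpa only [FormalMultilinearSeries.coeff_ofScalars] using hsum v)
    hx1 hx2 horder
end

section
/- The image of the p-mechanical bracket under the one-dimensional representations of the Heisenberg group is the Poisson bracket: for all Schwartz functions k₁, k₂ on ℝ³ and all (q, p) ∈ ℝ², −∫_{ℝ³} s·(k₁*k₂ − k₂*k₁)(s, x, y)·exp(i(xq + yp)) ds dx dy = (∂k̂₁/∂q)(q,p)·(∂k̂₂/∂p)(q,p) − (∂k̂₁/∂p)(q,p)·(∂k̂₂/∂q)(q,p), where k̂(q, p) = ∫_{ℝ³} k(s, x, y)·exp(i(xq + yp)) ds dx dy and * denotes convolution over the Heisenberg group. (The left-hand side is the value on the commutator of the antiderivative operator A with respect to s, composed with the one-dimensional representation ρ_{(q,p)}.) -/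
open MeasureTheory

/-- Inversion in the Heisenberg group: `(s,x,y)⁻¹ = (−s,−x,−y)`. -/
def heisInv (h : ℝ × ℝ × ℝ) : ℝ × ℝ × ℝ := (-h.1, -h.2.1, -h.2.2)

/-- Convolution over the Heisenberg group (with Lebesgue measure on `ℝ³` as
Haar measure): `(k₁*k₂)(g) = ∫_{H¹} k₁(h)·k₂(h⁻¹·g) dh`. -/
noncomputable def heisConv (k₁ k₂ : ℝ × ℝ × ℝ → ℂ) (g : ℝ × ℝ × ℝ) : ℂ :=
  ∫ h : ℝ × ℝ × ℝ, k₁ h * k₂ (heisMul (heisInv h) g)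

/-- The image `k̂(q, p) = ∫_{ℝ³} k(s, x, y)·exp(i(xq + yp)) ds dx dy` of `k`
under the one-dimensional representation `ρ_{(q,p)}` of the Heisenberg group. -/
noncomputable def heisHat (k : ℝ × ℝ × ℝ → ℂ) (q p : ℝ) : ℂ :=
  ∫ w : ℝ × ℝ × ℝ, k w * Complex.exp (Complex.I * ((w.2.1 * q + w.2.2 * p : ℝ) : ℂ))

/-!
Every left translation of `H¹` preserves Lebesgue measure and `exp(i(xq + yp))` is a character, so
`k ↦ k̂` turns convolution into multiplication. Writing `w = h·g` with `g = h⁻¹·w`, the group law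
gives `s(w) = s(h) + s(g) + (x(h) y(g) − y(h) x(g)) / 2`, so multiplication by `s` obeys the
deformed Leibniz rule
`s (k₁*k₂) = (s k₁)*k₂ + k₁*(s k₂) + ((x k₁)*(y k₂) − (y k₁)*(x k₂)) / 2`.
On the image of a commutator the first two terms cancel and the last two double. Since `∂/∂q` and
`∂/∂p` act on `k̂` as multiplication of `k` by `ix` and `iy`, what remains is the Poisson bracket.
-/

theorem measurePreserving_add_prodMk {α β G : Type*} [MeasurableSpace α] [MeasurableSpace β]
    {μ : Measure α} [SFinite μ] {μ' : Measure β} [SFinite μ'] [MeasurableSpace G] [Add G]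
    [MeasurableAdd₂ G] {ν : Measure G} [SFinite ν] [ν.IsAddLeftInvariant] {c : α → G} {T : α → β}
    (hc : Measurable c) (hT : MeasurePreserving T μ μ') :
    MeasurePreserving (fun z : G × α => (c z.2 + z.1, T z.2)) (ν.prod μ) (ν.prod μ') := by
  have skew : MeasurePreserving (fun z : α × G => (T z.1, c z.1 + z.2)) (μ.prod ν) (μ'.prod ν) :=
    hT.skew_product (by fun_prop) (.of_forall fun a => map_add_left_eq_self ν (c a))
  exact Measure.measurePreserving_swap.comp (skew.comp Measure.measurePreserving_swap)

theorem measurePreserving_heisMul_left (h : ℝ × ℝ × ℝ) : MeasurePreserving (heisMul h) := by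
  have shear : MeasurePreserving fun g : ℝ × ℝ × ℝ =>
      (h.1 + (h.2.1 * g.2.2 - h.2.2 * g.2.1) / 2 + g.1, h.2 + g.2) :=
    measurePreserving_add_prodMk (c := fun v : ℝ × ℝ => h.1 + (h.2.1 * v.2 - h.2.2 * v.1) / 2)
      (by fun_prop) (measurePreserving_add_left volume h.2)
  have heisMul_eq_shear : heisMul h = fun g : ℝ × ℝ × ℝ =>
      (h.1 + (h.2.1 * g.2.2 - h.2.2 * g.2.1) / 2 + g.1, h.2 + g.2) :=
    funext fun g => Prod.ext (add_right_comm _ _ _) rfl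
  rwa [heisMul_eq_shear]

theorem heisMul_heisInv_cancel_left (h g : ℝ × ℝ × ℝ) :
    heisMul h (heisMul (heisInv h) g) = g := by
  simp only [heisMul, heisInv, Prod.ext_iff]
  refine ⟨?_, ?_, ?_⟩ <;> ring

theorem measurePreserving_prodMk_heisMul_heisInv :
    MeasurePreserving (fun z : (ℝ × ℝ × ℝ) × (ℝ × ℝ × ℝ) => (z.1, heisMul (heisInv z.1) z.2))
      (volume.prod volume) (volume.prod volume) := by
  refine (MeasurePreserving.id volume).skew_product ?_
    (.of_forall fun h => (measurePreserving_heisMul_left (heisInv h)).map_eq)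
  unfold heisMul heisInv
  fun_prop

section Convolution

variable {k₁ k₂ : ℝ × ℝ × ℝ → ℂ}

theorem integrable_heisConv_integrand (hk₁ : Integrable k₁) (hk₂ : Integrable k₂) :
    Integrable (fun z : (ℝ × ℝ × ℝ) × (ℝ × ℝ × ℝ) =>
      k₁ z.1 * k₂ (heisMul (heisInv z.1) z.2)) (volume.prod volume) :=
  measurePreserving_prodMk_heisMul_heisInv.integrable_comp_of_integrable (hk₁.mul_prod hk₂)

theorem integrable_heisConv (hk₁ : Integrable k₁) (hk₂ : Integrable k₂) :
    Integrable (heisConv k₁ k₂) :=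
  (integrable_heisConv_integrand hk₁ hk₂).integral_prod_right

theorem integral_heisConv (hk₁ : Integrable k₁) (hk₂ : Integrable k₂) :
    ∫ w, heisConv k₁ k₂ w = (∫ w, k₁ w) * ∫ w, k₂ w := by
  have integral_translate (h : ℝ × ℝ × ℝ) : ∫ w, k₂ (heisMul (heisInv h) w) = ∫ w, k₂ w := by
    have translate := measurePreserving_heisMul_left (heisInv h)
    conv_rhs => rw [← translate.map_eq]
    exact (integral_map translate.aemeasurable
      (translate.map_eq.symm ▸ hk₂.aestronglyMeasurable)).symm
  calc ∫ w, heisConv k₁ k₂ w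
      = ∫ h, ∫ w, k₁ h * k₂ (heisMul (heisInv h) w) :=
        (integral_integral_swap (integrable_heisConv_integrand hk₁ hk₂)).symm
    _ = ∫ h, k₁ h * ∫ w, k₂ w := by simp only [integral_const_mul, integral_translate]
    _ = (∫ w, k₁ w) * ∫ w, k₂ w := integral_mul_const _ _

end Convolution

section Character

/-- The one-dimensional representation `ρ_{(q,p)}`, as the character `(s, x, y) ↦ exp(i(xq + yp))`
against which `heisHat` integrates. -/
noncomputable def heisChar (q p : ℝ) (w : ℝ × ℝ × ℝ) : ℂ :=
  Complex.exp (Complex.I * ((w.2.1 * q + w.2.2 * p : ℝ) : ℂ))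

theorem heisChar_heisMul (q p : ℝ) (h g : ℝ × ℝ × ℝ) :
    heisChar q p (heisMul h g) = heisChar q p h * heisChar q p g := by
  simp only [heisChar, heisMul, ← Complex.exp_add]
  congr 1
  push_cast
  ring

variable {k k₁ k₂ : ℝ × ℝ × ℝ → ℂ}

theorem integrable_mul_heisChar (hk : Integrable k) (q p : ℝ) :
    Integrable fun w => k w * heisChar q p w := by
  refine hk.mul_bdd (c := 1) (Continuous.aestronglyMeasurable ?_) (.of_forall fun w => ?_)
  · unfold heisChar
    fun_prop
  · rw [heisChar, Complex.norm_exp_I_mul_ofReal]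

theorem heisConv_mul_heisChar (k₁ k₂ : ℝ × ℝ × ℝ → ℂ) (q p : ℝ) (w : ℝ × ℝ × ℝ) :
    heisConv k₁ k₂ w * heisChar q p w =
      heisConv (fun h => k₁ h * heisChar q p h) (fun h => k₂ h * heisChar q p h) w := by
  rw [heisConv, ← integral_mul_const]
  refine integral_congr_ae (.of_forall fun h => ?_)
  have factor : heisChar q p w = heisChar q p h * heisChar q p (heisMul (heisInv h) w) := by
    rw [← heisChar_heisMul, heisMul_heisInv_cancel_left]
  simp only [factor]
  ring

theorem heisHat_heisConv (hk₁ : Integrable k₁) (hk₂ : Integrable k₂) (q p : ℝ) :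
    heisHat (heisConv k₁ k₂) q p = heisHat k₁ q p * heisHat k₂ q p :=
  calc heisHat (heisConv k₁ k₂) q p
      = ∫ w, heisConv (fun h => k₁ h * heisChar q p h) (fun h => k₂ h * heisChar q p h) w :=
        integral_congr_ae (.of_forall (heisConv_mul_heisChar k₁ k₂ q p))
    _ = heisHat k₁ q p * heisHat k₂ q p :=
        integral_heisConv (integrable_mul_heisChar hk₁ q p) (integrable_mul_heisChar hk₂ q p)

theorem heisHat_congr_ae (h : k₁ =ᵐ[volume] k₂) (q p : ℝ) : heisHat k₁ q p = heisHat k₂ q p :=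
  integral_congr_ae (h.mono fun w hw => by simp only [hw])

theorem heisHat_add (hk₁ : Integrable k₁) (hk₂ : Integrable k₂) (q p : ℝ) :
    heisHat (fun w => k₁ w + k₂ w) q p = heisHat k₁ q p + heisHat k₂ q p := by
  simp only [heisHat, add_mul]
  exact integral_add (integrable_mul_heisChar hk₁ q p) (integrable_mul_heisChar hk₂ q p)

theorem heisHat_sub (hk₁ : Integrable k₁) (hk₂ : Integrable k₂) (q p : ℝ) :
    heisHat (fun w => k₁ w - k₂ w) q p = heisHat k₁ q p - heisHat k₂ q p := by
  simp only [heisHat, sub_mul]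
  exact integral_sub (integrable_mul_heisChar hk₁ q p) (integrable_mul_heisChar hk₂ q p)

theorem heisHat_div_const (k : ℝ × ℝ × ℝ → ℂ) (c : ℂ) (q p : ℝ) :
    heisHat (fun w => k w / c) q p = heisHat k q p / c := by
  simp only [heisHat, div_mul_eq_mul_div, integral_div]

end Character

theorem hasDerivAt_integral_mul_cexp {α : Type*} [MeasurableSpace α] {μ : Measure α}
    {k : α → ℂ} {a b : α → ℝ} (hk : Integrable k μ) (ha : AEMeasurable a μ) (hb : AEMeasurable b μ)
    (hak : Integrable (fun w => (a w : ℂ) * k w) μ) (t : ℝ) :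
    HasDerivAt (fun t : ℝ => ∫ w, k w * Complex.exp (Complex.I * ((a w * t + b w : ℝ) : ℂ)) ∂μ)
      (Complex.I * ∫ w, (a w : ℂ) * k w *
        Complex.exp (Complex.I * ((a w * t + b w : ℝ) : ℂ)) ∂μ) t := by
  let phase (t : ℝ) (w : α) : ℂ := Complex.exp (Complex.I * ((a w * t + b w : ℝ) : ℂ))
  have norm_phase (t : ℝ) (w : α) : ‖phase t w‖ = 1 := Complex.norm_exp_I_mul_ofReal _
  have phase_meas (t : ℝ) : AEStronglyMeasurable (phase t) μ :=
    AEMeasurable.aestronglyMeasurable (by fun_prop)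
  have phase_deriv (w : α) (t : ℝ) :
      HasDerivAt (fun t => phase t w) (Complex.I * (a w * phase t w)) t := by
    have linear : HasDerivAt (fun t : ℝ => ((a w * t + b w : ℝ) : ℂ)) (a w : ℂ) t := by
      simpa using (((hasDerivAt_id t).const_mul (a w)).add_const (b w)).ofReal_comp
    exact (linear.const_mul Complex.I).cexp.congr_deriv (by ring)
  rw [← integral_const_mul]
  refine (hasDerivAt_integral_of_dominated_loc_of_deriv_le
    (F := fun t w => k w * phase t w) (F' := fun t w => Complex.I * (a w * k w * phase t w))
    (bound := fun w => ‖(a w : ℂ) * k w‖) Filter.univ_mem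
    (.of_forall fun t => hk.aestronglyMeasurable.mul (phase_meas t))
    (hk.mul_bdd (c := 1) (phase_meas t) (.of_forall fun w => (norm_phase t w).le))
    ((hak.aestronglyMeasurable.mul (phase_meas t)).const_mul Complex.I)
    (.of_forall fun w t _ => ?_) hak.norm (.of_forall fun w t _ => ?_)).2
  · simp only [norm_mul, norm_phase, Complex.norm_I, one_mul, mul_one, le_refl]
  · exact ((phase_deriv w t).const_mul (k w)).congr_deriv (by ring)

section FirstMoments

variable {k k₁ k₂ : ℝ × ℝ × ℝ → ℂ}

theorem hasDerivAt_heisHat_fst (hk : Integrable k) (hxk : Integrable fun w => (w.2.1 : ℂ) * k w)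
    (q p : ℝ) :
    HasDerivAt (fun q' => heisHat k q' p)
      (Complex.I * heisHat (fun w => (w.2.1 : ℂ) * k w) q p) q :=
  hasDerivAt_integral_mul_cexp (a := fun w : ℝ × ℝ × ℝ => w.2.1) (b := fun w => w.2.2 * p) hk
    (by fun_prop) (by fun_prop) hxk q

theorem hasDerivAt_heisHat_snd (hk : Integrable k) (hyk : Integrable fun w => (w.2.2 : ℂ) * k w)
    (q p : ℝ) :
    HasDerivAt (fun p' => heisHat k q p')
      (Complex.I * heisHat (fun w => (w.2.2 : ℂ) * k w) q p) p := by
  simpa only [heisHat, add_comm] using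
    hasDerivAt_integral_mul_cexp (a := fun w : ℝ × ℝ × ℝ => w.2.2) (b := fun w => w.2.1 * q) hk
      (by fun_prop) (by fun_prop) hyk p

/-- Kernels on the Heisenberg group that are integrable together with their products by each of
the coordinates `s`, `x`, `y`. On this class both the image of the bracket and
the first derivatives of `heisHat` are given by absolutely convergent integrals. -/
structure HasFirstMoments (k : ℝ × ℝ × ℝ → ℂ) : Prop where
  integrable : Integrable k
  s_mul : Integrable fun w => (w.1 : ℂ) * k w
  x_mul : Integrable fun w => (w.2.1 : ℂ) * k w
  y_mul : Integrable fun w => (w.2.2 : ℂ) * k w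

theorem fst_mul_heisConv_ae_eq (h₁ : HasFirstMoments k₁) (h₂ : HasFirstMoments k₂) :
    (fun w => (w.1 : ℂ) * heisConv k₁ k₂ w) =ᵐ[volume] fun w =>
      heisConv (fun h => h.1 * k₁ h) k₂ w + heisConv k₁ (fun g => g.1 * k₂ g) w +
        (heisConv (fun h => h.2.1 * k₁ h) (fun g => g.2.2 * k₂ g) w -
          heisConv (fun h => h.2.2 * k₁ h) (fun g => g.2.1 * k₂ g) w) / 2 := by
  filter_upwards [(integrable_heisConv_integrand h₁.s_mul h₂.integrable).prod_left_ae,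
    (integrable_heisConv_integrand h₁.integrable h₂.s_mul).prod_left_ae,
    (integrable_heisConv_integrand h₁.x_mul h₂.y_mul).prod_left_ae,
    (integrable_heisConv_integrand h₁.y_mul h₂.x_mul).prod_left_ae] with w hsk hks hxy hyx
  have fst_split (h : ℝ × ℝ × ℝ) : (w.1 : ℂ) = h.1 + (heisMul (heisInv h) w).1 +
      (h.2.1 * (heisMul (heisInv h) w).2.2 - h.2.2 * (heisMul (heisInv h) w).2.1) / 2 := by
    exact_mod_cast (congrArg Prod.fst (heisMul_heisInv_cancel_left h w)).symm
  simp only [heisConv]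
  -- `by exact` waits until the integrands are known as lambdas, not as pointwise sums of functions
  rw [← integral_const_mul, ← integral_add hsk hks, ← integral_sub hxy hyx, ← integral_div,
    ← integral_add (by exact hsk.add hks) (by exact (hxy.sub hyx).div_const 2)]
  refine integral_congr_ae (.of_forall fun h => ?_)
  simp only [fst_split h]
  ring

theorem integrable_fst_mul_heisConv (h₁ : HasFirstMoments k₁) (h₂ : HasFirstMoments k₂) :
    Integrable fun w => (w.1 : ℂ) * heisConv k₁ k₂ w :=
  (((integrable_heisConv h₁.s_mul h₂.integrable).add
    (integrable_heisConv h₁.integrable h₂.s_mul)).add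
    (((integrable_heisConv h₁.x_mul h₂.y_mul).sub
      (integrable_heisConv h₁.y_mul h₂.x_mul)).div_const 2)).congr
    (fst_mul_heisConv_ae_eq h₁ h₂).symm

theorem heisHat_fst_mul_heisConv (h₁ : HasFirstMoments k₁) (h₂ : HasFirstMoments k₂) (q p : ℝ) :
    heisHat (fun w => (w.1 : ℂ) * heisConv k₁ k₂ w) q p =
      heisHat (fun w => w.1 * k₁ w) q p * heisHat k₂ q p +
        heisHat k₁ q p * heisHat (fun w => w.1 * k₂ w) q p +
        (heisHat (fun w => w.2.1 * k₁ w) q p * heisHat (fun w => w.2.2 * k₂ w) q p -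
          heisHat (fun w => w.2.2 * k₁ w) q p * heisHat (fun w => w.2.1 * k₂ w) q p) / 2 := by
  have hsk := integrable_heisConv h₁.s_mul h₂.integrable
  have hks := integrable_heisConv h₁.integrable h₂.s_mul
  have hxy := integrable_heisConv h₁.x_mul h₂.y_mul
  have hyx := integrable_heisConv h₁.y_mul h₂.x_mul
  rw [heisHat_congr_ae (fst_mul_heisConv_ae_eq h₁ h₂),
    heisHat_add (by exact hsk.add hks) (by exact (hxy.sub hyx).div_const 2), heisHat_add hsk hks,
    heisHat_div_const, heisHat_sub hxy hyx, heisHat_heisConv h₁.s_mul h₂.integrable,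
    heisHat_heisConv h₁.integrable h₂.s_mul, heisHat_heisConv h₁.x_mul h₂.y_mul,
    heisHat_heisConv h₁.y_mul h₂.x_mul]

theorem heisHat_fst_mul_heisConv_sub_heisConv (h₁ : HasFirstMoments k₁)
    (h₂ : HasFirstMoments k₂) (q p : ℝ) :
    heisHat (fun w => (w.1 : ℂ) * (heisConv k₁ k₂ w - heisConv k₂ k₁ w)) q p =
      heisHat (fun w => w.2.1 * k₁ w) q p * heisHat (fun w => w.2.2 * k₂ w) q p -
        heisHat (fun w => w.2.2 * k₁ w) q p * heisHat (fun w => w.2.1 * k₂ w) q p := by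
  simp only [mul_sub]
  rw [heisHat_sub (integrable_fst_mul_heisConv h₁ h₂) (integrable_fst_mul_heisConv h₂ h₁),
    heisHat_fst_mul_heisConv h₁ h₂, heisHat_fst_mul_heisConv h₂ h₁]
  ring

end FirstMoments

instance isAddHaarMeasure_volume_real_prod_real_prod_real :
    (volume : Measure (ℝ × ℝ × ℝ)).IsAddHaarMeasure :=
  Measure.prod.instIsAddHaarMeasure _ _

theorem integrable_smul_schwartzMap {E : Type*} [NormedAddCommGroup E] [NormedSpace ℝ E]
    [MeasurableSpace E] [BorelSpace E] [SecondCountableTopology E] {μ : Measure E}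
    [μ.HasTemperateGrowth] {𝕜 F : Type*} [RCLike 𝕜] [NormedAddCommGroup F] [NormedSpace ℝ F]
    [NormedSpace 𝕜 F] {a : E → 𝕜} (ha : a.HasTemperateGrowth) (k : SchwartzMap E F) :
    Integrable (fun w => a w • k w) μ := by
  simpa only [SchwartzMap.smulLeftCLM_apply ha] using
    (SchwartzMap.smulLeftCLM F a k).integrable (μ := μ)

open ContinuousLinearMap in
theorem hasFirstMoments_schwartzMap (k : SchwartzMap (ℝ × ℝ × ℝ) ℂ) : HasFirstMoments k where
  integrable := k.integrable
  s_mul := integrable_smul_schwartzMap (Complex.ofRealCLM ∘L fst ℝ ℝ (ℝ × ℝ)).hasTemperateGrowth k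
  x_mul := integrable_smul_schwartzMap
    (Complex.ofRealCLM ∘L fst ℝ ℝ ℝ ∘L snd ℝ ℝ (ℝ × ℝ)).hasTemperateGrowth k
  y_mul := integrable_smul_schwartzMap
    (Complex.ofRealCLM ∘L snd ℝ ℝ ℝ ∘L snd ℝ ℝ (ℝ × ℝ)).hasTemperateGrowth k

theorem pmechanical_bracket_gives_poisson_bracket_general {k₁ k₂ : ℝ × ℝ × ℝ → ℂ}
    (h₁ : HasFirstMoments k₁) (h₂ : HasFirstMoments k₂) (q p : ℝ) :
    -(∫ w : ℝ × ℝ × ℝ,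
        (w.1 : ℂ) * (heisConv k₁ k₂ w - heisConv k₂ k₁ w) *
          Complex.exp (Complex.I * ((w.2.1 * q + w.2.2 * p : ℝ) : ℂ))) =
      deriv (fun q' : ℝ => heisHat k₁ q' p) q * deriv (fun p' : ℝ => heisHat k₂ q p') p -
        deriv (fun p' : ℝ => heisHat k₁ q p') p * deriv (fun q' : ℝ => heisHat k₂ q' p) q := by
  change -heisHat (fun w => (w.1 : ℂ) * (heisConv k₁ k₂ w - heisConv k₂ k₁ w)) q p = _
  rw [heisHat_fst_mul_heisConv_sub_heisConv h₁ h₂,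
    (hasDerivAt_heisHat_fst h₁.integrable h₁.x_mul q p).deriv,
    (hasDerivAt_heisHat_snd h₁.integrable h₁.y_mul q p).deriv,
    (hasDerivAt_heisHat_fst h₂.integrable h₂.x_mul q p).deriv,
    (hasDerivAt_heisHat_snd h₂.integrable h₂.y_mul q p).deriv]
  linear_combination
    (heisHat (fun w => w.2.2 * k₁ w) q p * heisHat (fun w => w.2.1 * k₂ w) q p -
      heisHat (fun w => w.2.1 * k₁ w) q p * heisHat (fun w => w.2.2 * k₂ w) q p) * Complex.I_sq

/-- The image of the p-mechanical bracket under the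
one-dimensional representations of the Heisenberg group is the Poisson bracket:
`−∫ s·(k₁*k₂ − k₂*k₁)(s,x,y)·e^{i(xq+yp)} ds dx dy
   = ∂k̂₁/∂q·∂k̂₂/∂p − ∂k̂₁/∂p·∂k̂₂/∂q`. -/
theorem pmechanical_bracket_gives_poisson_bracket
    (k₁ k₂ : SchwartzMap (ℝ × ℝ × ℝ) ℂ) (q p : ℝ) :
    -(∫ w : ℝ × ℝ × ℝ,
        (w.1 : ℂ) * (heisConv (⇑k₁) (⇑k₂) w - heisConv (⇑k₂) (⇑k₁) w) *
          Complex.exp (Complex.I * ((w.2.1 * q + w.2.2 * p : ℝ) : ℂ))) =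
      deriv (fun q' : ℝ => heisHat (⇑k₁) q' p) q *
          deriv (fun p' : ℝ => heisHat (⇑k₂) q p') p -
        deriv (fun p' : ℝ => heisHat (⇑k₁) q p') p *
          deriv (fun q' : ℝ => heisHat (⇑k₂) q' p) q :=
  pmechanical_bracket_gives_poisson_bracket_general (hasFirstMoments_schwartzMap k₁)
    (hasFirstMoments_schwartzMap k₂) q p
end
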